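/- Let ν > 0, Δt > 0, λ > 0, σ := √(λ² + 1/ν), C₁ := −ν⁻¹·sinh(σΔt)/(σ·cosh(σΔt) + λ·sinh(σΔt)) and C₂ := σ/(σ·cosh(σΔt) + λ·sinh(σΔt)). For every integer N ≥ 3, the infinity norm of T^PS_N (the maximum over rows of the sum of absolute values of the entries in that row) equals max(1, ν)·|C₁| + C₂; explicitly, it equals (σ + ν⁻¹·sinh(σΔt))/(σ·cosh(σΔt) + λ·sinh(σΔt)) if 0 < ν ≤ 1, and (σ + sinh(σΔt))/(σ·cosh(σΔt) + λ·sinh(σΔt)) if ν > 1. -/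

import Mathlib

noncomputable section

/-- σ := √(λ² + 1/ν). -/
def sig (ν lam : ℝ) : ℝ := Real.sqrt (lam ^ 2 + 1 / ν)

/-- C₁ := −ν⁻¹·sinh(σΔt)/(σ·cosh(σΔt) + λ·sinh(σΔt)). -/
def C1 (ν Δt lam : ℝ) : ℝ :=
  -(ν⁻¹ * Real.sinh (sig ν lam * Δt)) /
    (sig ν lam * Real.cosh (sig ν lam * Δt) + lam * Real.sinh (sig ν lam * Δt))

/-- C₂ := σ/(σ·cosh(σΔt) + λ·sinh(σΔt)). -/
def C2 (ν Δt lam : ℝ) : ℝ :=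
  sig ν lam /
    (sig ν lam * Real.cosh (sig ν lam * Δt) + lam * Real.sinh (sig ν lam * Δt))

/-- The block tridiagonal Toeplitz iteration matrix `T^PS_N` of size `2(N-1) × 2(N-1)`,
with diagonal blocks `T_d = [[0, C₁], [−ν C₁, 0]]`, superdiagonal blocks
`T_r = [[C₂, 0], [0, 0]]` and subdiagonal blocks `T_l = [[0, 0], [0, C₂]]`. -/
def TPS (ν Δt lam : ℝ) (N : ℕ) : Matrix (Fin (2 * (N - 1))) (Fin (2 * (N - 1))) ℝ :=
  fun i j =>
    if (i : ℕ) / 2 = (j : ℕ) / 2 then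
      -- diagonal block T_d
      if (i : ℕ) % 2 = 0 ∧ (j : ℕ) % 2 = 1 then C1 ν Δt lam
      else if (i : ℕ) % 2 = 1 ∧ (j : ℕ) % 2 = 0 then -ν * C1 ν Δt lam
      else 0
    else if (j : ℕ) / 2 = (i : ℕ) / 2 + 1 then
      -- superdiagonal block T_r
      if (i : ℕ) % 2 = 0 ∧ (j : ℕ) % 2 = 0 then C2 ν Δt lam else 0
    else if (i : ℕ) / 2 = (j : ℕ) / 2 + 1 then
      -- subdiagonal block T_l
      if (i : ℕ) % 2 = 1 ∧ (j : ℕ) % 2 = 1 then C2 ν Δt lam else 0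
    else 0

/-!
Row `i` of `T^PS_N` has at most two nonzero entries. For even `i` they are `C₁` in column `i + 1`
and, unless the row lies in the last block, `C₂` in column `i + 2`; for odd `i` they are `-ν C₁` in
column `i - 1` and, unless the row lies in the first block, `C₂` in column `i - 2`. As soon as there
are two blocks, both `|C₁| + |C₂|` and `|ν| |C₁| + |C₂|` occur as row sums, and the larger of them
is the norm. The signs of `C₁` and `C₂` come from `|λ| < σ` and `|sinh| < cosh`, which make the
common denominator positive.
-/

theorem sum_fin_ite_val_eq {M : Type*} [AddCommMonoid M] (n m : ℕ) (c : M) :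
    ∑ j : Fin n, (if (j : ℕ) = m then c else 0) = if m < n then c else 0 := by
  rw [Fin.sum_univ_eq_sum_range (fun j => if j = m then c else 0), Finset.sum_ite_eq']
  simp only [Finset.mem_range]

theorem abs_sinh_lt_cosh (x : ℝ) : |Real.sinh x| < Real.cosh x := by
  rw [Real.abs_sinh, ← Real.cosh_abs]
  exact Real.sinh_lt_cosh |x|

theorem mul_cosh_add_mul_sinh_pos {a b : ℝ} (hab : |b| < a) (x : ℝ) :
    0 < a * Real.cosh x + b * Real.sinh x := by
  have ha : 0 < a := (abs_nonneg b).trans_lt hab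
  have h : |b * Real.sinh x| < a * Real.cosh x := by
    calc |b * Real.sinh x| = |b| * |Real.sinh x| := abs_mul _ _
      _ ≤ a * |Real.sinh x| := by gcongr
      _ < a * Real.cosh x := by gcongr; exact abs_sinh_lt_cosh x
  linarith [neg_abs_le (b * Real.sinh x)]

section RowSums

variable (ν Δt lam : ℝ) {N : ℕ} {i : Fin (2 * (N - 1))}

theorem abs_TPS_apply_of_even (hi : (i : ℕ) % 2 = 0) (j : Fin (2 * (N - 1))) :
    |TPS ν Δt lam N i j| =
      (if (j : ℕ) = i + 1 then |C1 ν Δt lam| else 0) +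
        if (j : ℕ) = i + 2 then |C2 ν Δt lam| else 0 := by
  unfold TPS
  split_ifs <;> first | omega | simp

-- The inner `2 ≤ i` discards the column `1 - 2 = 0` that truncated subtraction gives for `i = 1`.
theorem abs_TPS_apply_of_odd (hi : (i : ℕ) % 2 = 1) (j : Fin (2 * (N - 1))) :
    |TPS ν Δt lam N i j| =
      (if (j : ℕ) = i - 1 then |ν| * |C1 ν Δt lam| else 0) +
        if (j : ℕ) = i - 2 then (if 2 ≤ (i : ℕ) then |C2 ν Δt lam| else 0) else 0 := by
  unfold TPS
  split_ifs <;> first | omega | simp [abs_mul]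

theorem sum_abs_TPS_of_even (hi : (i : ℕ) % 2 = 0) :
    ∑ j, |TPS ν Δt lam N i j| =
      |C1 ν Δt lam| + if (i : ℕ) + 2 < 2 * (N - 1) then |C2 ν Δt lam| else 0 := by
  simp_rw [abs_TPS_apply_of_even ν Δt lam hi, Finset.sum_add_distrib, sum_fin_ite_val_eq]
  rw [if_pos (show (i : ℕ) + 1 < 2 * (N - 1) by omega)]

theorem sum_abs_TPS_of_odd (hi : (i : ℕ) % 2 = 1) :
    ∑ j, |TPS ν Δt lam N i j| =
      |ν| * |C1 ν Δt lam| + if 2 ≤ (i : ℕ) then |C2 ν Δt lam| else 0 := by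
  simp_rw [abs_TPS_apply_of_odd ν Δt lam hi, Finset.sum_add_distrib, sum_fin_ite_val_eq]
  rw [if_pos (show (i : ℕ) - 1 < 2 * (N - 1) by omega),
    if_pos (show (i : ℕ) - 2 < 2 * (N - 1) by omega)]

theorem sum_abs_TPS_le (i : Fin (2 * (N - 1))) :
    ∑ j, |TPS ν Δt lam N i j| ≤ max 1 |ν| * |C1 ν Δt lam| + |C2 ν Δt lam| := by
  have ite_le (p : Prop) [Decidable p] : (if p then |C2 ν Δt lam| else 0) ≤ |C2 ν Δt lam| := by
    split_ifs <;> simp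
  rcases Nat.mod_two_eq_zero_or_one i with hi | hi
  · rw [sum_abs_TPS_of_even ν Δt lam hi]
    exact add_le_add (le_mul_of_one_le_left (abs_nonneg _) (le_max_left _ _)) (ite_le _)
  · rw [sum_abs_TPS_of_odd ν Δt lam hi]
    exact add_le_add (mul_le_mul_of_nonneg_right (le_max_right _ _) (abs_nonneg _)) (ite_le _)

theorem exists_sum_abs_TPS_eq (hN : 3 ≤ N) :
    ∃ i, ∑ j, |TPS ν Δt lam N i j| = max 1 |ν| * |C1 ν Δt lam| + |C2 ν Δt lam| := by
  rcases le_total |ν| 1 with hν | hν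
  · refine ⟨⟨0, by omega⟩, ?_⟩
    rw [sum_abs_TPS_of_even ν Δt lam (Nat.zero_mod 2), if_pos (show 0 + 2 < 2 * (N - 1) by omega),
      max_eq_left hν, one_mul]
  · refine ⟨⟨3, by omega⟩, ?_⟩
    rw [sum_abs_TPS_of_odd ν Δt lam (show 3 % 2 = 1 by norm_num),
      if_pos (show 2 ≤ 3 by norm_num), max_eq_right hν]

theorem iSup_sum_abs_TPS (hN : 3 ≤ N) :
    ⨆ i, ∑ j, |TPS ν Δt lam N i j| = max 1 |ν| * |C1 ν Δt lam| + |C2 ν Δt lam| :=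
  IsGreatest.csSup_eq
    ⟨exists_sum_abs_TPS_eq ν Δt lam hN, Set.forall_mem_range.2 (sum_abs_TPS_le ν Δt lam)⟩

end RowSums

section Coefficients

variable {ν : ℝ}

theorem abs_lt_sig (hν : 0 < ν) (lam : ℝ) : |lam| < sig ν lam := by
  rw [← Real.sqrt_sq_eq_abs]
  exact Real.sqrt_lt_sqrt (sq_nonneg lam) (lt_add_of_pos_right _ (one_div_pos.2 hν))

theorem sig_pos (hν : 0 < ν) (lam : ℝ) : 0 < sig ν lam :=
  (abs_nonneg lam).trans_lt (abs_lt_sig hν lam)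

theorem C2_pos (hν : 0 < ν) (Δt lam : ℝ) : 0 < C2 ν Δt lam :=
  div_pos (sig_pos hν lam) (mul_cosh_add_mul_sinh_pos (abs_lt_sig hν lam) _)

theorem C1_nonpos (hν : 0 < ν) {Δt : ℝ} (hΔt : 0 ≤ Δt) (lam : ℝ) : C1 ν Δt lam ≤ 0 := by
  have hsinh : 0 ≤ Real.sinh (sig ν lam * Δt) :=
    Real.sinh_nonneg_iff.2 (mul_nonneg (sig_pos hν lam).le hΔt)
  exact div_nonpos_of_nonpos_of_nonneg
    (neg_nonpos.2 (mul_nonneg (inv_nonneg.2 hν.le) hsinh))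
    (mul_cosh_add_mul_sinh_pos (abs_lt_sig hν lam) _).le

end Coefficients

theorem TPS_infinity_norm_general (ν Δt lam : ℝ)
    (hν : 0 < ν) (hΔt : 0 ≤ Δt) :
    ∀ N : ℕ, 3 ≤ N →
      (⨆ i : Fin (2 * (N - 1)), ∑ j : Fin (2 * (N - 1)), |TPS ν Δt lam N i j|) =
          max 1 ν * |C1 ν Δt lam| + C2 ν Δt lam ∧
      (ν ≤ 1 →
        (⨆ i : Fin (2 * (N - 1)), ∑ j : Fin (2 * (N - 1)), |TPS ν Δt lam N i j|) =
          (sig ν lam + ν⁻¹ * Real.sinh (sig ν lam * Δt)) /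
            (sig ν lam * Real.cosh (sig ν lam * Δt) + lam * Real.sinh (sig ν lam * Δt))) ∧
      (1 < ν →
        (⨆ i : Fin (2 * (N - 1)), ∑ j : Fin (2 * (N - 1)), |TPS ν Δt lam N i j|) =
          (sig ν lam + Real.sinh (sig ν lam * Δt)) /
            (sig ν lam * Real.cosh (sig ν lam * Δt) + lam * Real.sinh (sig ν lam * Δt))) := by
  intro N hN
  have norm_eq : ⨆ i, ∑ j, |TPS ν Δt lam N i j| =
      max 1 ν * |C1 ν Δt lam| + C2 ν Δt lam := by
    rw [iSup_sum_abs_TPS ν Δt lam hN, abs_of_pos hν, abs_of_pos (C2_pos hν Δt lam)]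
  have abs_C1 : |C1 ν Δt lam| = -C1 ν Δt lam := abs_of_nonpos (C1_nonpos hν hΔt lam)
  refine ⟨norm_eq, fun hν_le => ?_, fun hν_gt => ?_⟩
  · rw [norm_eq, max_eq_left hν_le, abs_C1, C1, C2]
    ring
  · rw [norm_eq, max_eq_right hν_gt.le, abs_C1, C1, C2, add_div, ← neg_div, neg_neg,
      ← mul_div_assoc, mul_inv_cancel_left₀ hν.ne', add_comm]

/-- for N ≥ 3, the infinity norm of `T^PS_N` (maximum over rows of the sum of
absolute values of the entries) equals max(1, ν)·|C₁| + C₂; explicitly it equals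
(σ + ν⁻¹ sinh(σΔt))/(σ cosh(σΔt) + λ sinh(σΔt)) if ν ≤ 1 and
(σ + sinh(σΔt))/(σ cosh(σΔt) + λ sinh(σΔt)) if ν > 1. -/
theorem TPS_infinity_norm (ν Δt lam : ℝ)
    (hν : 0 < ν) (hΔt : 0 < Δt) (hlam : 0 < lam) :
    ∀ N : ℕ, 3 ≤ N →
      (⨆ i : Fin (2 * (N - 1)), ∑ j : Fin (2 * (N - 1)), |TPS ν Δt lam N i j|) =
          max 1 ν * |C1 ν Δt lam| + C2 ν Δt lam ∧
      (ν ≤ 1 →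
        (⨆ i : Fin (2 * (N - 1)), ∑ j : Fin (2 * (N - 1)), |TPS ν Δt lam N i j|) =
          (sig ν lam + ν⁻¹ * Real.sinh (sig ν lam * Δt)) /
            (sig ν lam * Real.cosh (sig ν lam * Δt) + lam * Real.sinh (sig ν lam * Δt))) ∧
      (1 < ν →
        (⨆ i : Fin (2 * (N - 1)), ∑ j : Fin (2 * (N - 1)), |TPS ν Δt lam N i j|) =
          (sig ν lam + Real.sinh (sig ν lam * Δt)) /
            (sig ν lam * Real.cosh (sig ν lam * Δt) + lam * Real.sinh (sig ν lam * Δt))) :=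
  TPS_infinity_norm_general ν Δt lam hν hΔt.le
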